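/- Let (aₙ)_{n∈ℕ} be a sequence of complex numbers such that Σ_{n=1}^∞ |aₙ| e^{−πn/2} < ∞, and define f(x) = Σ_{n=1}^∞ aₙ Lₙ(x) for x > 0, where Lₙ(x) = ∫₀^x K_{in}(t)/(x² − t²)^{1/2} dt is the Lebedev kernel (π/(2 cosh(πn/2))) K_{in/2}(x)[I_{in/2}(x) + I_{−in/2}(x)]. Then for every n ∈ ℕ the integral ∫₀^∞ Φₙ(x) f(x) dx converges absolutely, where Φₙ(x) = x ∫_{−π}^{π} K₀(x cosh u) sinh(2u) sin(nu) du, and aₙ = (sinh(πn)/π³) ∫₀^∞ Φₙ(x) f(x) dx. -/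

import Mathlib

/-!
The kernels `Φₙ` and `Lₘ` are biorthogonal on `(0, ∞)`, and `∫₀^∞ |Φₙ Lₘ| = O(e^{-πm/2})` as `m`
grows, so that the series `∑ aₘ Φₙ Lₘ` converges in `L¹` and may be integrated term by term.

Insert both integral representations into `∫₀^∞ Φₙ Lₘ` and integrate over `x` first. Since
`K₀(cx) = ½ ∫ e^{-c√(x² + y²)} / √(x² + y²) dy`, substituting `x = √(t² + r²)` turns
`∫ₜ^∞ x K₀(cx) / √(x² - t²) dx` into the integral of a radial function over the plane, which polar
coordinates evaluate to `π e^{-ct} / (2c)`. With `c = cosh u` there remains the Laplace transform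
`sinh u ∫₀^∞ K_{im}(t) e^{-t cosh u} dt = π sin(mu) / sinh(πm)`, and the orthogonality of the sines
concludes. The Laplace transform is the Fourier transform of `1 / (cosh u + cosh v)`; as
`σ(u + v) - σ(u - v) = sinh v / (cosh u + cosh v)` for the sigmoid `σ`, it reduces after an
integration by parts to that of `σ' = σ(1 - σ)`, a Beta integral after the substitution `s = σ(u)`.

The `L¹` norm of `Φₙ Lₘ` is controlled by `∫₀^∞ |K_{im}(t)| e^{-t} dt`. By the Cauchy–Schwarz
inequality and the formula `∫₀^∞ K_{im}(t)² dt = π² / (4 cosh(πm))`, it is `O(e^{-πm/2})`.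
-/

open MeasureTheory Real

/-- The modified Bessel function of the second kind of purely imaginary order `iτ`,
`K_{iτ}(x) = ∫₀^∞ e^{−x cosh u} cos(τu) du` (real-valued). -/
noncomputable def besselKi (τ x : ℝ) : ℝ :=
  ∫ u in Set.Ioi (0 : ℝ), Real.exp (-x * Real.cosh u) * Real.cos (τ * u)

/-- The Lebedev kernel `Lₙ(x) = ∫₀^x K_{in}(t)/(x² − t²)^{1/2} dt`, which equals
`(π/(2 cosh(πn/2))) K_{in/2}(x)[I_{in/2}(x) + I_{−in/2}(x)]`. -/
noncomputable def lebedevL (n : ℕ) (x : ℝ) : ℝ :=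
  ∫ t in (0 : ℝ)..x, besselKi n t / Real.sqrt (x ^ 2 - t ^ 2)

/-- The kernel `Φₙ(x) = x ∫_{−π}^{π} K₀(x cosh u) sinh(2u) sin(nu) du`. -/
noncomputable def PhiKer (n : ℕ) (x : ℝ) : ℝ :=
  x * ∫ u in (-π)..π, besselKi 0 (x * Real.cosh u) * Real.sinh (2 * u) * Real.sin (n * u)

lemma exp_abs_le_two_mul_cosh (u : ℝ) : exp |u| ≤ 2 * cosh u := by
  rw [← cosh_abs, cosh_eq]
  linarith [exp_pos (-|u|)]

lemma integrable_exp_neg_abs : Integrable (fun u : ℝ => exp (-|u|)) := by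
  have h_right : IntegrableOn (fun u : ℝ => exp (-|u|)) (Set.Ioi 0) :=
    (integrableOn_exp_neg_Ioi 0).congr_fun
      (fun u hu => by simp only [abs_of_pos (Set.mem_Ioi.1 hu)]) measurableSet_Ioi
  have h_left : IntegrableOn (fun u : ℝ => exp (-|u|)) (Set.Iic 0) :=
    (integrableOn_exp_Iic 0).congr_fun
      (fun u hu => by simp only [abs_of_nonpos (Set.mem_Iic.1 hu), neg_neg]) measurableSet_Iic
  rw [← integrableOn_univ, ← Set.Iic_union_Ioi (a := (0 : ℝ))]
  exact h_left.union h_right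

lemma integrable_inv_cosh : Integrable (fun u : ℝ => (cosh u)⁻¹) := by
  refine (integrable_exp_neg_abs.const_mul 2).mono'
    (by fun_prop : Measurable _).aestronglyMeasurable (.of_forall fun u => ?_)
  rw [norm_of_nonneg (inv_nonneg.2 (cosh_pos u).le), exp_neg,
    inv_le_comm₀ (cosh_pos u) (by positivity), mul_inv, inv_inv]
  linarith [exp_abs_le_two_mul_cosh u]

lemma cosh_add_cosh_pos (u v : ℝ) : 0 < cosh u + cosh v :=
  add_pos (cosh_pos u) (cosh_pos v)

lemma integrable_inv_cosh_add_cosh (v : ℝ) :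
    Integrable (fun u : ℝ => (cosh u + cosh v)⁻¹) := by
  refine integrable_inv_cosh.mono' (by fun_prop : Measurable _).aestronglyMeasurable
    (.of_forall fun u => ?_)
  rw [norm_of_nonneg (inv_nonneg.2 (cosh_add_cosh_pos u v).le)]
  exact inv_anti₀ (cosh_pos u) (le_add_of_nonneg_right (cosh_pos v).le)

lemma norm_cexp_mul_mul_I (τ u : ℝ) : ‖Complex.exp (τ * u * Complex.I)‖ = 1 := by
  rw [← Complex.ofReal_mul, Complex.norm_exp_ofReal_mul_I]

lemma integrable_ofReal_mul_cexp {g : ℝ → ℝ} (hg : Integrable g) (τ : ℝ) :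
    Integrable (fun u : ℝ => (g u : ℂ) * Complex.exp (τ * u * Complex.I)) :=
  hg.ofReal.mul_bdd (c := 1) (by fun_prop) (.of_forall fun u => (norm_cexp_mul_mul_I τ u).le)

lemma sigmoid_mul_sigmoid_neg (w : ℝ) :
    sigmoid w * sigmoid (-w) = (2 * cosh (w / 2))⁻¹ ^ 2 := by
  have h : (2 * cosh (w / 2)) ^ 2 = (1 + exp (-w)) * (1 + exp w) := by
    have h_pos : exp w = exp (w / 2) ^ 2 := by rw [← exp_nat_mul]; ring_nf
    have h_neg : exp (-w) = exp (-(w / 2)) ^ 2 := by rw [← exp_nat_mul]; ring_nf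
    have h_mul : exp (w / 2) * exp (-(w / 2)) = 1 := by rw [← exp_add]; simp
    rw [cosh_eq, h_pos, h_neg]
    linear_combination (1 - exp (w / 2) * exp (-(w / 2))) * h_mul
  rw [inv_pow, h, mul_inv, sigmoid_def, sigmoid_def, neg_neg]

lemma sigmoid_mul_sigmoid_neg_eq_inv_cosh_add_cosh (w : ℝ) :
    sigmoid w * sigmoid (-w) = 2⁻¹ * (cosh w + cosh 0)⁻¹ := by
  rw [sigmoid_mul_sigmoid_neg, inv_pow, ← mul_inv, mul_pow, cosh_sq, cosh_zero]
  have h_double := cosh_two_mul (w / 2)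
  rw [mul_div_cancel₀ w two_ne_zero, cosh_sq] at h_double
  rw [h_double]
  ring_nf

lemma betaIntegral_eq_integral_sigmoid (p q : ℂ) :
    Complex.betaIntegral p q = ∫ w : ℝ, (sigmoid w : ℂ) ^ p * (sigmoid (-w) : ℂ) ^ q := by
  have h_deriv (w : ℝ) : HasDerivWithinAt sigmoid (sigmoid w * sigmoid (-w)) Set.univ w := by
    simpa only [sigmoid_neg] using (hasDerivAt_sigmoid w).hasDerivWithinAt
  rw [Complex.betaIntegral, intervalIntegral.integral_of_le zero_le_one,
    integral_Ioc_eq_integral_Ioo, ← range_sigmoid, ← Set.image_univ,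
    integral_image_eq_integral_abs_deriv_smul .univ (fun w _ => h_deriv w)
      sigmoid_injective.injOn, Measure.restrict_univ]
  refine integral_congr_ae (.of_forall fun w => ?_)
  have hpos := sigmoid_pos w
  have hneg := sigmoid_pos (-w)
  have hpos' : (sigmoid w : ℂ) ≠ 0 := mod_cast hpos.ne'
  have hneg' : (sigmoid (-w) : ℂ) ≠ 0 := mod_cast hneg.ne'
  have h_one_sub : (1 - sigmoid w : ℂ) = (sigmoid (-w) : ℂ) := by simp [sigmoid_neg]
  simp only [abs_of_pos (mul_pos hpos hneg), Complex.real_smul, Complex.ofReal_mul, h_one_sub]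
  rw [Complex.cpow_sub _ _ hpos', Complex.cpow_sub _ _ hneg', Complex.cpow_one, Complex.cpow_one]
  field_simp

lemma sigmoid_cpow_add_mul_sigmoid_neg_cpow_sub (a z : ℂ) (w : ℝ) :
    (sigmoid w : ℂ) ^ (a + z) * (sigmoid (-w) : ℂ) ^ (a - z) =
      ((sigmoid w * sigmoid (-w) : ℝ) : ℂ) ^ a * Complex.exp (z * w) := by
  have hpos : (sigmoid w : ℂ) ≠ 0 := mod_cast (sigmoid_pos w).ne'
  have hneg : (sigmoid (-w) : ℂ) ≠ 0 := mod_cast (sigmoid_pos (-w)).ne'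
  have h_log : Complex.log (sigmoid (-w)) = Complex.log (sigmoid w) - w := by
    rw [← Complex.ofReal_log (sigmoid_pos _).le, ← Complex.ofReal_log (sigmoid_pos _).le,
      ← sigmoid_mul_rexp_neg, log_mul (sigmoid_pos w).ne' (exp_pos _).ne', log_exp]
    push_cast
    ring
  rw [Complex.ofReal_mul, Complex.mul_cpow_ofReal_nonneg (sigmoid_pos w).le (sigmoid_pos (-w)).le]
  simp only [Complex.cpow_def_of_ne_zero hpos, Complex.cpow_def_of_ne_zero hneg,
    ← Complex.exp_add, h_log]
  ring_nf

lemma integral_sigmoid_mul_sigmoid_neg_cpow_mul_cexp {a z : ℂ} (h_add : 0 < (a + z).re)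
    (h_sub : 0 < (a - z).re) :
    ∫ w : ℝ, ((sigmoid w * sigmoid (-w) : ℝ) : ℂ) ^ a * Complex.exp (z * w) =
      Complex.Gamma (a + z) * Complex.Gamma (a - z) / Complex.Gamma (2 * a) := by
  simp_rw [← sigmoid_cpow_add_mul_sigmoid_neg_cpow_sub]
  rw [← betaIntegral_eq_integral_sigmoid, Complex.betaIntegral_eq_Gamma_mul_div _ _ h_add h_sub,
    add_add_sub_cancel, two_mul]

lemma fourier_sigmoid_mul_sigmoid_neg {τ : ℝ} (hτ : τ ≠ 0) :
    ∫ w : ℝ, ((sigmoid w * sigmoid (-w) : ℝ) : ℂ) * Complex.exp (τ * w * Complex.I) =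
      ((π * τ / sinh (π * τ) : ℝ) : ℂ) := by
  have h := integral_sigmoid_mul_sigmoid_neg_cpow_mul_cexp (a := 1) (z := τ * Complex.I)
    (by simp) (by simp)
  have h_ne : (τ * Complex.I : ℂ) ≠ 0 := by simp [hτ]
  have h_sinh : Complex.sinh (π * τ) ≠ 0 := by
    exact_mod_cast sinh_ne_zero.2 (mul_ne_zero pi_ne_zero hτ)
  have h_Gamma_two : Complex.Gamma (2 * 1) = 1 := by
    simp [Complex.Gamma_ofNat_eq_factorial]
  simp_rw [Complex.cpow_one, mul_right_comm _ Complex.I] at h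
  rw [h, h_Gamma_two, div_one, add_comm, Complex.Gamma_add_one _ h_ne, mul_assoc,
    Complex.Gamma_mul_Gamma_one_sub, ← mul_assoc (π : ℂ), Complex.sin_mul_I]
  push_cast
  field_simp [h_sinh]

lemma fourier_inv_two_mul_cosh_half (τ : ℝ) :
    ∫ w : ℝ, (((2 * cosh (w / 2))⁻¹ : ℝ) : ℂ) * Complex.exp (τ * w * Complex.I) =
      ((π / cosh (π * τ) : ℝ) : ℂ) := by
  have h := integral_sigmoid_mul_sigmoid_neg_cpow_mul_cexp (a := 1 / 2) (z := τ * Complex.I)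
    (by simp) (by simp)
  have h_sqrt (w : ℝ) : ((sigmoid w * sigmoid (-w) : ℝ) : ℂ) ^ (1 / 2 : ℂ) =
      (((2 * cosh (w / 2))⁻¹ : ℝ) : ℂ) := by
    have h_nonneg : 0 ≤ (2 * cosh (w / 2))⁻¹ := by have := cosh_pos (w / 2); positivity
    have h_half : (1 / 2 : ℂ) = ((1 / 2 : ℝ) : ℂ) := by push_cast; rfl
    rw [sigmoid_mul_sigmoid_neg, h_half, ← Complex.ofReal_cpow (sq_nonneg _), ← sqrt_eq_rpow,
      sqrt_sq h_nonneg]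
  have h_arg : (π : ℂ) * (1 / 2 + τ * Complex.I) = π * τ * Complex.I + π / 2 := by ring
  have h_refl : (1 / 2 - τ * Complex.I : ℂ) = 1 - (1 / 2 + τ * Complex.I) := by ring
  simp_rw [h_sqrt, mul_right_comm _ Complex.I] at h
  rw [h, h_refl, Complex.Gamma_mul_Gamma_one_sub, h_arg, Complex.sin_add_pi_div_two,
    Complex.cos_mul_I, mul_one_div_cancel two_ne_zero, Complex.Gamma_one]
  push_cast
  rw [div_one]

lemma integral_inv_cosh : ∫ u : ℝ, (cosh u)⁻¹ = π := by
  have h := fourier_inv_two_mul_cosh_half 0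
  simp only [Complex.ofReal_zero, zero_mul, Complex.exp_zero, mul_one, mul_zero, cosh_zero,
    div_one, integral_complex_ofReal, Complex.ofReal_inj] at h
  rw [Measure.integral_comp_div (fun w => (2 * cosh w)⁻¹) 2] at h
  simpa only [mul_inv, integral_const_mul, smul_eq_mul, abs_two,
    mul_inv_cancel_left₀ (two_ne_zero (α := ℝ))] using h

lemma sigmoid_add_sub_sigmoid_sub (u v : ℝ) :
    sigmoid (u + v) - sigmoid (u - v) = sinh v * (cosh u + cosh v)⁻¹ := by
  have hu : exp (-u) = (exp u)⁻¹ := exp_neg u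
  have hv : exp (-v) = (exp v)⁻¹ := exp_neg v
  have h_add : exp (-(u + v)) = (exp u)⁻¹ * (exp v)⁻¹ := by rw [neg_add, exp_add, hu, hv]
  have h_sub : exp (-(u - v)) = (exp u)⁻¹ * exp v := by rw [neg_sub, sub_eq_neg_add, exp_add, hu]
  rw [sigmoid_def, sigmoid_def, sinh_eq, cosh_eq, cosh_eq, h_add, h_sub, hu, hv]
  have := exp_pos u
  have := exp_pos v
  field_simp
  ring

lemma hasDerivAt_cexp_mul_I (τ u : ℝ) :
    HasDerivAt (fun u : ℝ => Complex.exp (τ * u * Complex.I))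
      (τ * Complex.I * Complex.exp (τ * u * Complex.I)) u := by
  have h := (((hasDerivAt_id u).ofReal_comp.const_mul (τ : ℂ)).mul_const Complex.I).cexp
  simpa only [id, Complex.ofReal_one, mul_one, mul_comm (Complex.exp _)] using h

lemma integral_comp_add_mul_cexp (g : ℝ → ℂ) (τ v : ℝ) :
    ∫ u : ℝ, g (u + v) * Complex.exp (τ * u * Complex.I) =
      Complex.exp (-(τ * v * Complex.I)) * ∫ u : ℝ, g u * Complex.exp (τ * u * Complex.I) := by
  rw [← integral_const_mul,
    ← integral_add_right_eq_self (fun u : ℝ => Complex.exp (-(τ * v * Complex.I)) *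
      (g u * Complex.exp (τ * u * Complex.I))) v]
  congr 1 with u
  rw [mul_left_comm, ← Complex.exp_add]
  push_cast
  ring_nf

lemma integrable_sigmoid_mul_sigmoid_neg : Integrable fun w : ℝ => sigmoid w * sigmoid (-w) := by
  simp_rw [sigmoid_mul_sigmoid_neg_eq_inv_cosh_add_cosh]
  exact (integrable_inv_cosh_add_cosh 0).const_mul _

lemma integral_comp_add_sub_comp_sub_mul_cexp {g : ℝ → ℝ} (hg : Integrable g) (τ v : ℝ) :
    ∫ u : ℝ, ((g (u + v) - g (u - v) : ℝ) : ℂ) * Complex.exp (τ * u * Complex.I) =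
      -(2 * Complex.I * Complex.sin (τ * v)) *
        ∫ u : ℝ, (g u : ℂ) * Complex.exp (τ * u * Complex.I) := by
  have h_add := integral_comp_add_mul_cexp (fun u => (g u : ℂ)) τ v
  have h_sub := integral_comp_add_mul_cexp (fun u => (g u : ℂ)) τ (-v)
  simp only [← sub_eq_add_neg] at h_sub
  simp_rw [Complex.ofReal_sub, sub_mul]
  rw [integral_sub (integrable_ofReal_mul_cexp (hg.comp_add_right v) τ)
    (integrable_ofReal_mul_cexp (hg.comp_sub_right v) τ), h_add, h_sub, Complex.sin]
  push_cast
  ring_nf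
  rw [Complex.I_sq]
  ring

lemma fourier_inv_cosh_add_cosh {τ : ℝ} (hτ : τ ≠ 0) (v : ℝ) :
    sinh v * ∫ u : ℝ, (((cosh u + cosh v)⁻¹ : ℝ) : ℂ) * Complex.exp (τ * u * Complex.I) =
      ((2 * π * sin (τ * v) / sinh (π * τ) : ℝ) : ℂ) := by
  set σ' : ℝ → ℝ := fun w => sigmoid w * sigmoid (-w)
  have hσ (w : ℝ) : HasDerivAt sigmoid (σ' w) w := by
    simpa only [σ', sigmoid_neg] using hasDerivAt_sigmoid w
  have h_deriv (u : ℝ) : HasDerivAt (fun u : ℝ => ((sigmoid (u + v) - sigmoid (u - v) : ℝ) : ℂ))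
      ((σ' (u + v) - σ' (u - v) : ℝ) : ℂ) u :=
    (((hσ _).comp_add_const u v).sub ((hσ _).comp_sub_const u v)).ofReal_comp
  have h_int : Integrable fun u : ℝ => sigmoid (u + v) - sigmoid (u - v) := by
    simp_rw [sigmoid_add_sub_sigmoid_sub]
    exact (integrable_inv_cosh_add_cosh v).const_mul _
  have h_add := integrable_sigmoid_mul_sigmoid_neg.comp_add_right v
  have h_sub := integrable_sigmoid_mul_sigmoid_neg.comp_sub_right v
  have h_parts := integral_mul_deriv_eq_deriv_mul_of_integrable (fun u _ => h_deriv u)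
    (fun u _ => hasDerivAt_cexp_mul_I τ u)
    (((integrable_ofReal_mul_cexp h_int τ).const_mul (τ * Complex.I)).congr
      (.of_forall fun u => by simp only [Pi.mul_apply]; ring))
    (integrable_ofReal_mul_cexp (h_add.sub h_sub) τ) (integrable_ofReal_mul_cexp h_int τ)
  have h_ne : (τ * Complex.I : ℂ) ≠ 0 := by simp [hτ]
  apply mul_left_cancel₀ h_ne
  calc τ * Complex.I * (sinh v * ∫ u : ℝ, (((cosh u + cosh v)⁻¹ : ℝ) : ℂ) *
        Complex.exp (τ * u * Complex.I))
      = ∫ u : ℝ, ((sigmoid (u + v) - sigmoid (u - v) : ℝ) : ℂ) *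
          (τ * Complex.I * Complex.exp (τ * u * Complex.I)) := by
        rw [← integral_const_mul, ← integral_const_mul]
        congr 1 with u
        rw [sigmoid_add_sub_sigmoid_sub, Complex.ofReal_mul]
        ring
    _ = 2 * Complex.I * Complex.sin (τ * v) * ((π * τ / sinh (π * τ) : ℝ) : ℂ) := by
        rw [h_parts, integral_comp_add_sub_comp_sub_mul_cexp integrable_sigmoid_mul_sigmoid_neg,
          fourier_sigmoid_mul_sigmoid_neg hτ]
        ring
    _ = τ * Complex.I * ((2 * π * sin (τ * v) / sinh (π * τ) : ℝ) : ℂ) := by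
        push_cast
        ring

lemma integrableOn_exp_neg_mul_Ioi {c : ℝ} (hc : 0 < c) (s : ℝ) :
    IntegrableOn (fun t => exp (-t * c)) (Set.Ioi s) := by
  simpa only [mul_comm _ (-c), neg_mul_comm] using integrableOn_exp_mul_Ioi (neg_neg_of_pos hc) s

lemma integral_exp_neg_mul_Ioi {c : ℝ} (hc : 0 < c) :
    ∫ t in Set.Ioi 0, exp (-t * c) = c⁻¹ := by
  have h := integral_exp_mul_Ioi (neg_neg_of_pos hc) 0
  simp only [mul_zero, exp_zero, neg_div_neg_eq, one_div] at h
  simpa only [neg_mul, mul_comm c] using h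

section LaplaceFubini

variable {Y E : Type*} [MeasurableSpace Y] {ν : Measure Y} [SFinite ν] [NormedAddCommGroup E]
  [NormedSpace ℝ E] {φ : Y → ℝ} {h : Y → E}

lemma integrable_prod_exp_neg_mul_smul (hφ_meas : Measurable φ) (hφ_pos : ∀ y, 0 < φ y)
    (hh : Integrable (fun y => (φ y)⁻¹ • h y) ν) :
    Integrable (fun p : ℝ × Y => exp (-p.1 * φ p.2) • h p.2)
      ((volume.restrict (Set.Ioi 0)).prod ν) := by
  have h_meas : AEStronglyMeasurable h ν :=
    (hφ_meas.aestronglyMeasurable.smul hh.1).congr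
      (.of_forall fun y => by simp [smul_smul, (hφ_pos y).ne'])
  have h_prod_meas : AEStronglyMeasurable (fun p : ℝ × Y => exp (-p.1 * φ p.2) • h p.2)
      ((volume.restrict (Set.Ioi 0)).prod ν) :=
    (by fun_prop : Measurable fun p : ℝ × Y => exp (-p.1 * φ p.2)).aestronglyMeasurable.smul
      h_meas.comp_snd
  refine (integrable_prod_iff' h_prod_meas).2
    ⟨.of_forall fun y => (integrableOn_exp_neg_mul_Ioi (hφ_pos y) 0).smul_const (h y),
      hh.norm.congr (.of_forall fun y => ?_)⟩
  simp only [norm_smul, norm_of_nonneg (exp_pos _).le, integral_mul_const,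
    integral_exp_neg_mul_Ioi (hφ_pos y),
    norm_of_nonneg (inv_pos.2 (hφ_pos y)).le]

lemma integral_Ioi_integral_exp_neg_mul_smul [CompleteSpace E] (hφ_meas : Measurable φ)
    (hφ_pos : ∀ y, 0 < φ y)
    (hh : Integrable (fun y => (φ y)⁻¹ • h y) ν) :
    ∫ t in Set.Ioi 0, ∫ y, exp (-t * φ y) • h y ∂ν = ∫ y, (φ y)⁻¹ • h y ∂ν := by
  rw [integral_integral_swap (integrable_prod_exp_neg_mul_smul hφ_meas hφ_pos hh)]
  simp_rw [integral_smul_const, integral_exp_neg_mul_Ioi (hφ_pos _)]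

end LaplaceFubini

lemma integrable_exp_neg_mul_cosh {t : ℝ} (ht : 0 < t) :
    Integrable (fun u : ℝ => exp (-t * cosh u)) := by
  refine (integrable_inv_cosh.const_mul t⁻¹).mono' (by fun_prop) (.of_forall fun u => ?_)
  have h_pos : 0 < t * cosh u := mul_pos ht (cosh_pos u)
  rw [norm_of_nonneg (exp_pos _).le, neg_mul, exp_neg, ← mul_inv]
  exact inv_anti₀ h_pos (by linarith [add_one_le_exp (t * cosh u)])

lemma measurable_besselKi (τ : ℝ) : Measurable (besselKi τ) := by
  have h : Continuous fun p : ℝ × ℝ => exp (-p.1 * cosh p.2) * cos (τ * p.2) := by fun_prop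
  exact h.stronglyMeasurable.integral_prod_right'.measurable

lemma besselKi_zero_nonneg (x : ℝ) : 0 ≤ besselKi 0 x :=
  integral_nonneg fun u => by
    simp only [zero_mul, cos_zero, mul_one]
    exact (exp_pos _).le

lemma integral_eq_two_mul_integral_Ioi_of_even {g : ℝ → ℝ} (hg : g.Even) :
    ∫ u, g u = 2 * ∫ u in Set.Ioi 0, g u := by
  rw [← integral_comp_abs]
  congr 1 with u
  rcases abs_choice u with h | h <;> rw [h]
  exact (hg u).symm

lemma integral_mul_cexp_of_even {g : ℝ → ℝ} (hg_even : g.Even) (hg : Integrable g) (τ : ℝ) :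
    ∫ u : ℝ, (g u : ℂ) * Complex.exp (τ * u * Complex.I) =
      ((2 * ∫ u in Set.Ioi 0, g u * cos (τ * u) : ℝ) : ℂ) := by
  have h_int := integrable_ofReal_mul_cexp hg τ
  have h_re (u : ℝ) : RCLike.re ((g u : ℂ) * Complex.exp (τ * u * Complex.I)) =
      g u * cos (τ * u) := by
    rw [← Complex.ofReal_mul, RCLike.re_to_complex, Complex.re_ofReal_mul,
      Complex.exp_ofReal_mul_I_re]
  have h_im (u : ℝ) : RCLike.im ((g u : ℂ) * Complex.exp (τ * u * Complex.I)) =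
      g u * sin (τ * u) := by
    rw [← Complex.ofReal_mul, RCLike.im_to_complex, Complex.im_ofReal_mul,
      Complex.exp_ofReal_mul_I_im]
  have h_odd : ∫ u, g u * sin (τ * u) = 0 := by
    have := integral_neg_eq_self (fun u => g u * sin (τ * u)) volume
    simp only [hg_even _, mul_neg, sin_neg, integral_neg] at this
    linarith
  apply Complex.ext
  · rw [Complex.ofReal_re, ← integral_eq_two_mul_integral_Ioi_of_even
      (fun u => by simp [hg_even u]), ← RCLike.re_to_complex, ← integral_re h_int]
    simp_rw [h_re]
  · rw [Complex.ofReal_im, ← RCLike.im_to_complex, ← integral_im h_int]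
    simp_rw [h_im, h_odd]

lemma fourier_exp_neg_mul_cosh {t : ℝ} (ht : 0 < t) (τ : ℝ) :
    ∫ u : ℝ, ((exp (-t * cosh u) : ℝ) : ℂ) * Complex.exp (τ * u * Complex.I) =
      ((2 * besselKi τ t : ℝ) : ℂ) :=
  integral_mul_cexp_of_even (fun u => by simp only [cosh_neg]) (integrable_exp_neg_mul_cosh ht) τ

lemma besselKi_mul_exp_neg_mul_cosh_eq_integral {t : ℝ} (ht : 0 < t) (τ v : ℝ) :
    ((2 * (besselKi τ t * exp (-t * cosh v)) : ℝ) : ℂ) =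
      ∫ u : ℝ, exp (-t * (cosh u + cosh v)) • Complex.exp (τ * u * Complex.I) := by
  rw [← mul_assoc, Complex.ofReal_mul, ← fourier_exp_neg_mul_cosh ht, ← integral_mul_const]
  congr 1 with u
  rw [Complex.real_smul, mul_add, exp_add, Complex.ofReal_mul, mul_right_comm]

lemma laplace_besselKi {τ : ℝ} (hτ : τ ≠ 0) (v : ℝ) :
    sinh v * ∫ t in Set.Ioi 0, besselKi τ t * exp (-t * cosh v) =
      π * sin (τ * v) / sinh (π * τ) := by
  have h_fubini : ((2 * ∫ t in Set.Ioi 0, besselKi τ t * exp (-t * cosh v) : ℝ) : ℂ) =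
      ∫ u : ℝ, (((cosh u + cosh v)⁻¹ : ℝ) : ℂ) * Complex.exp (τ * u * Complex.I) := by
    rw [← integral_const_mul, ← integral_complex_ofReal,
      setIntegral_congr_fun measurableSet_Ioi fun t ht =>
        besselKi_mul_exp_neg_mul_cosh_eq_integral ht τ v]
    exact integral_Ioi_integral_exp_neg_mul_smul (by fun_prop) (cosh_add_cosh_pos · v)
      (integrable_ofReal_mul_cexp (integrable_inv_cosh_add_cosh v) τ)
  have h := fourier_inv_cosh_add_cosh hτ v
  rw [← h_fubini, ← Complex.ofReal_mul, Complex.ofReal_inj] at h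
  linear_combination h / 2

lemma measurePreserving_half_sub_half_add :
    MeasurePreserving (fun p : ℝ × ℝ => (p.1 / 2 - p.2, p.1 / 2 + p.2)) := by
  have h_shear : MeasurePreserving (fun p : ℝ × ℝ => (p.1, p.1 / 2 + p.2)) :=
    (MeasurePreserving.id volume).skew_product (g := fun w z => w / 2 + z) (by fun_prop)
      (.of_forall fun w => map_add_left_eq_self volume (w / 2))
  have h_comp : (fun p : ℝ × ℝ => (p.1 / 2 - p.2, p.1 / 2 + p.2)) =
      (fun p => (p.1 - p.2, p.2)) ∘ fun p => (p.1, p.1 / 2 + p.2) := by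
    funext p
    simp only [Function.comp_apply, Prod.mk.injEq, and_true]
    ring
  rw [h_comp]
  exact (measurePreserving_sub_prod volume volume).comp h_shear

lemma cosh_sub_add_cosh_add (x y : ℝ) : cosh (x - y) + cosh (x + y) = 2 * cosh x * cosh y := by
  rw [cosh_sub, cosh_add]
  ring

lemma integrable_inv_two_mul_cosh_half : Integrable (fun w : ℝ => (2 * cosh (w / 2))⁻¹) := by
  simpa only [mul_inv] using (integrable_inv_cosh.comp_div two_ne_zero).const_mul 2⁻¹

lemma integrable_prod_inv_cosh_add_cosh :
    Integrable (fun p : ℝ × ℝ => (cosh p.1 + cosh p.2)⁻¹) := by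
  rw [← measurePreserving_half_sub_half_add.integrable_comp
    (by fun_prop : Measurable _).aestronglyMeasurable]
  simp_rw [Function.comp_def, cosh_sub_add_cosh_add, mul_inv (2 * cosh _)]
  exact integrable_inv_two_mul_cosh_half.mul_prod integrable_inv_cosh

lemma integral_prod_inv_cosh_add_cosh_smul_cexp (τ : ℝ) :
    ∫ p : ℝ × ℝ, (cosh p.1 + cosh p.2)⁻¹ •
      (Complex.exp (τ * p.1 * Complex.I) * Complex.exp (τ * p.2 * Complex.I)) =
      ((π ^ 2 / cosh (π * τ) : ℝ) : ℂ) := by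
  have h_factor (p : ℝ × ℝ) : (cosh (p.1 / 2 - p.2) + cosh (p.1 / 2 + p.2))⁻¹ •
      (Complex.exp (τ * (p.1 / 2 - p.2 : ℝ) * Complex.I) *
        Complex.exp (τ * (p.1 / 2 + p.2 : ℝ) * Complex.I)) =
      (((2 * cosh (p.1 / 2))⁻¹ : ℝ) : ℂ) * Complex.exp (τ * p.1 * Complex.I) *
        (((cosh p.2)⁻¹ : ℝ) : ℂ) := by
    rw [cosh_sub_add_cosh_add, mul_inv, Complex.real_smul, ← Complex.exp_add,
      Complex.ofReal_mul, mul_right_comm]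
    congr 3
    push_cast
    ring
  rw [← measurePreserving_half_sub_half_add.map_eq, integral_map
    measurePreserving_half_sub_half_add.measurable.aemeasurable
    (by fun_prop : Measurable _).aestronglyMeasurable]
  simp_rw [h_factor]
  rw [Measure.volume_eq_prod, integral_prod_mul (fun w : ℝ =>
      (((2 * cosh (w / 2))⁻¹ : ℝ) : ℂ) * Complex.exp (τ * w * Complex.I))
      (fun z => (((cosh z)⁻¹ : ℝ) : ℂ)), fourier_inv_two_mul_cosh_half, integral_complex_ofReal,
    integral_inv_cosh, ← Complex.ofReal_mul]
  congr 1
  ring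

lemma four_mul_besselKi_sq_eq_integral {t : ℝ} (ht : 0 < t) (τ : ℝ) :
    ((4 * besselKi τ t ^ 2 : ℝ) : ℂ) =
      ∫ p : ℝ × ℝ, exp (-t * (cosh p.1 + cosh p.2)) •
        (Complex.exp (τ * p.1 * Complex.I) * Complex.exp (τ * p.2 * Complex.I)) := by
  calc ((4 * besselKi τ t ^ 2 : ℝ) : ℂ)
      = ((2 * besselKi τ t : ℝ) : ℂ) * ((2 * besselKi τ t : ℝ) : ℂ) := by push_cast; ring
    _ = _ := by
      rw [← fourier_exp_neg_mul_cosh ht, ← integral_prod_mul, ← Measure.volume_eq_prod]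
      congr 1 with p
      rw [mul_mul_mul_comm, Complex.real_smul, mul_add, exp_add, Complex.ofReal_mul]

lemma integrable_prod_inv_cosh_add_cosh_smul_cexp (τ : ℝ) :
    Integrable (fun p : ℝ × ℝ => (cosh p.1 + cosh p.2)⁻¹ •
      (Complex.exp (τ * p.1 * Complex.I) * Complex.exp (τ * p.2 * Complex.I))) :=
  integrable_prod_inv_cosh_add_cosh.smul_bdd 1 (by fun_prop) (.of_forall fun p => by
    rw [norm_mul, norm_cexp_mul_mul_I, norm_cexp_mul_mul_I, one_mul])

lemma integrableOn_besselKi_sq (τ : ℝ) :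
    IntegrableOn (fun t => besselKi τ t ^ 2) (Set.Ioi 0) := by
  have h := (integrable_prod_exp_neg_mul_smul (φ := fun p : ℝ × ℝ => cosh p.1 + cosh p.2)
    (by fun_prop) (fun p => cosh_add_cosh_pos _ _)
    (integrable_prod_inv_cosh_add_cosh_smul_cexp τ)).integral_prod_left
  have h_four : IntegrableOn (fun t => ((4 * besselKi τ t ^ 2 : ℝ) : ℂ)) (Set.Ioi 0) :=
    IntegrableOn.congr_fun h (fun t ht => (four_mul_besselKi_sq_eq_integral ht τ).symm)
      measurableSet_Ioi
  simpa only [IntegrableOn, RCLike.re_to_complex, Complex.ofReal_re, inv_mul_cancel_left₀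
    (four_ne_zero (α := ℝ))] using h_four.re.const_mul 4⁻¹

lemma integral_besselKi_sq (τ : ℝ) :
    ∫ t in Set.Ioi 0, besselKi τ t ^ 2 = π ^ 2 / (4 * cosh (π * τ)) := by
  have h : ((4 * ∫ t in Set.Ioi 0, besselKi τ t ^ 2 : ℝ) : ℂ) =
      ((π ^ 2 / cosh (π * τ) : ℝ) : ℂ) := by
    rw [← integral_prod_inv_cosh_add_cosh_smul_cexp, ← integral_const_mul,
      ← integral_complex_ofReal, setIntegral_congr_fun measurableSet_Ioi fun t ht =>
        four_mul_besselKi_sq_eq_integral ht τ]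
    exact integral_Ioi_integral_exp_neg_mul_smul (by fun_prop)
      (fun p : ℝ × ℝ => cosh_add_cosh_pos p.1 p.2) (integrable_prod_inv_cosh_add_cosh_smul_cexp τ)
  rw [mul_comm 4, ← div_div, ← Complex.ofReal_injective h, mul_div_cancel_left₀ _ four_ne_zero]

lemma memLp_besselKi (τ : ℝ) : MemLp (besselKi τ) 2 (volume.restrict (Set.Ioi 0)) :=
  (memLp_two_iff_integrable_sq (measurable_besselKi τ).aestronglyMeasurable).2
    (integrableOn_besselKi_sq τ)

lemma exp_neg_sq (t : ℝ) : exp (-t) ^ 2 = exp (-t * 2) := by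
  rw [← exp_nat_mul, mul_comm, Nat.cast_two]

lemma memLp_exp_neg : MemLp (fun t : ℝ => exp (-t)) 2 (volume.restrict (Set.Ioi 0)) :=
  (memLp_two_iff_integrable_sq (by fun_prop)).2 <| by
    simpa only [exp_neg_sq, IntegrableOn] using integrableOn_exp_neg_mul_Ioi two_pos 0

lemma integrableOn_besselKi_mul_exp_neg (τ : ℝ) :
    IntegrableOn (fun t => besselKi τ t * exp (-t)) (Set.Ioi 0) :=
  (memLp_besselKi τ).integrable_mul memLp_exp_neg

lemma integral_abs_besselKi_mul_exp_neg_le (τ : ℝ) :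
    ∫ t in Set.Ioi 0, |besselKi τ t| * exp (-t) ≤ π / 2 * exp (-π * τ / 2) := by
  have h_holder := integral_mul_le_Lp_mul_Lq_of_nonneg (μ := volume.restrict (Set.Ioi 0))
    HolderConjugate.two_two (.of_forall fun t => abs_nonneg (besselKi τ t))
    (.of_forall fun t => (exp_pos (-t)).le)
    (by simpa [Function.comp_def] using (memLp_besselKi τ).norm) (by simpa using memLp_exp_neg)
  simp only [rpow_two, sq_abs, exp_neg_sq, integral_besselKi_sq,
    integral_exp_neg_mul_Ioi two_pos, ← sqrt_eq_rpow] at h_holder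
  have h_cosh : exp (π * τ) ≤ 2 * cosh (π * τ) :=
    (exp_le_exp.2 (le_abs_self _)).trans (exp_abs_le_two_mul_cosh _)
  calc ∫ t in Set.Ioi 0, |besselKi τ t| * exp (-t)
      ≤ √(π ^ 2 / (4 * cosh (π * τ))) * √2⁻¹ := h_holder
    _ = √((π / 2) ^ 2 * (2 * cosh (π * τ))⁻¹) := by
      rw [← sqrt_mul (by positivity)]
      congr 1
      field_simp
      ring
    _ ≤ √((π / 2) ^ 2 * (exp (π * τ))⁻¹) := by gcongr
    _ = √((π / 2 * exp (-π * τ / 2)) ^ 2) := by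
      rw [mul_pow, ← exp_neg, ← exp_nat_mul]
      ring_nf
    _ = π / 2 * exp (-π * τ / 2) := sqrt_sq (by positivity)

section PolarCoordinates

variable {E : Type*} [NormedAddCommGroup E] [NormedSpace ℝ E]

lemma integral_comp_sqrt_sq_add_sq (g : ℝ → E) :
    ∫ p : ℝ × ℝ, g √(p.1 ^ 2 + p.2 ^ 2) = (2 * π) • ∫ r in Set.Ioi 0, r • g r := by
  have h := integral_fun_norm_addHaar (volume : Measure ℂ) g
  rw [← Complex.volume_preserving_equiv_real_prod.symm.integral_comp'] at h
  simpa [Complex.finrank_real_complex, Measure.real, Complex.volume_ball,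
    Complex.norm_eq_sqrt_sq_add_sq, Complex.measurableEquivRealProd_symm_apply,
    two_smul, two_mul, add_smul] using h

lemma integrable_comp_sqrt_sq_add_sq {g : ℝ → E} :
    Integrable (fun p : ℝ × ℝ => g √(p.1 ^ 2 + p.2 ^ 2)) ↔
      IntegrableOn (fun r => r • g r) (Set.Ioi 0) := by
  have h := integrable_fun_norm_addHaar (volume : Measure ℂ) (f := g)
  rw [← Complex.volume_preserving_equiv_real_prod.symm.integrable_comp_emb
    (MeasurableEquiv.measurableEmbedding _)] at h
  simpa [Complex.finrank_real_complex, Function.comp_def, Complex.norm_eq_sqrt_sq_add_sq,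
    Complex.measurableEquivRealProd_symm_apply] using h

end PolarCoordinates

section AbelSubstitution

variable {E : Type*} [NormedAddCommGroup E] [NormedSpace ℝ E] {t : ℝ}

lemma hasDerivAt_sqrt_sq_sub_sq {x : ℝ} (ht : 0 ≤ t) (hx : t < x) :
    HasDerivAt (fun x => √(x ^ 2 - t ^ 2)) (x / √(x ^ 2 - t ^ 2)) x := by
  have h_pos : 0 < x ^ 2 - t ^ 2 := sub_pos.2 (pow_lt_pow_left₀ hx ht two_ne_zero)
  refine (((hasDerivAt_pow 2 x).sub_const (t ^ 2)).sqrt h_pos.ne').congr_deriv ?_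
  rw [Nat.cast_two, Nat.add_one_sub_one, pow_one, mul_div_mul_left _ _ two_ne_zero]

lemma image_sqrt_sq_sub_sq_Ioi (ht : 0 ≤ t) :
    (fun x => √(x ^ 2 - t ^ 2)) '' Set.Ioi t = Set.Ioi 0 := by
  refine Set.Subset.antisymm (Set.image_subset_iff.2 fun x hx =>
    sqrt_pos.2 (sub_pos.2 (pow_lt_pow_left₀ hx ht two_ne_zero))) fun r hr => ?_
  have hr : 0 < r := hr
  refine ⟨√(t ^ 2 + r ^ 2), lt_sqrt_of_sq_lt (lt_add_of_pos_right _ (pow_pos hr 2)), ?_⟩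
  simp only
  rw [sq_sqrt (by positivity), add_sub_cancel_left, sqrt_sq hr.le]

lemma injOn_sqrt_sq_sub_sq_Ioi (ht : 0 ≤ t) :
    Set.InjOn (fun x => √(x ^ 2 - t ^ 2)) (Set.Ioi t) := by
  refine StrictMonoOn.injOn fun x hx y _ hxy => sqrt_lt_sqrt ?_ (sub_lt_sub_right ?_ _)
  · exact sub_nonneg.2 (pow_le_pow_left₀ ht (le_of_lt hx) 2)
  · exact pow_lt_pow_left₀ hxy (ht.trans (le_of_lt hx)) two_ne_zero

-- As `√` vanishes on negative numbers, quotients by `√(x² - t²)` are extended by `0` to `x ≤ t`.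
lemma sqrt_sq_sub_sq_eq_zero {x : ℝ} (hx : 0 ≤ x) (hxt : x ≤ t) : √(x ^ 2 - t ^ 2) = 0 :=
  sqrt_eq_zero_of_nonpos (sub_nonpos.2 (pow_le_pow_left₀ hx hxt 2))

lemma abs_deriv_smul_comp_sqrt_sq_sub_sq (ht : 0 ≤ t) (g : ℝ → E) {x : ℝ} (hx : t < x) :
    |x / √(x ^ 2 - t ^ 2)| • g √(t ^ 2 + √(x ^ 2 - t ^ 2) ^ 2) =
      (x / √(x ^ 2 - t ^ 2)) • g x := by
  have h_pos : 0 < x := ht.trans_lt hx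
  rw [sq_sqrt (sub_nonneg.2 (pow_le_pow_left₀ ht hx.le 2)), add_sub_cancel, sqrt_sq h_pos.le,
    abs_of_nonneg (by positivity)]

lemma div_sqrt_sq_sub_sq_smul_eq_zero (g : ℝ → E) {x : ℝ} (hx : x ∈ Set.Ioi 0 \ Set.Ioi t) :
    (x / √(x ^ 2 - t ^ 2)) • g x = 0 := by
  rw [sqrt_sq_sub_sq_eq_zero (le_of_lt hx.1) (not_lt.1 hx.2), div_zero, zero_smul]

lemma integral_div_sqrt_sq_sub_sq_smul (ht : 0 ≤ t) (g : ℝ → E) :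
    ∫ x in Set.Ioi 0, (x / √(x ^ 2 - t ^ 2)) • g x =
      ∫ r in Set.Ioi 0, g √(t ^ 2 + r ^ 2) := by
  rw [setIntegral_eq_of_subset_of_forall_sdiff_eq_zero measurableSet_Ioi (Set.Ioi_subset_Ioi ht)
    fun x => div_sqrt_sq_sub_sq_smul_eq_zero g]
  conv_rhs => rw [← image_sqrt_sq_sub_sq_Ioi ht, integral_image_eq_integral_abs_deriv_smul
    measurableSet_Ioi (fun x hx => (hasDerivAt_sqrt_sq_sub_sq ht hx).hasDerivWithinAt)
    (injOn_sqrt_sq_sub_sq_Ioi ht)]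
  exact setIntegral_congr_fun measurableSet_Ioi fun x hx =>
    (abs_deriv_smul_comp_sqrt_sq_sub_sq ht g hx).symm

lemma integrableOn_div_sqrt_sq_sub_sq_smul (ht : 0 ≤ t) {g : ℝ → E}
    (hg : IntegrableOn (fun r => g √(t ^ 2 + r ^ 2)) (Set.Ioi 0)) :
    IntegrableOn (fun x => (x / √(x ^ 2 - t ^ 2)) • g x) (Set.Ioi 0) := by
  rw [← image_sqrt_sq_sub_sq_Ioi ht, integrableOn_image_iff_integrableOn_abs_deriv_smul
    measurableSet_Ioi (fun x hx => (hasDerivAt_sqrt_sq_sub_sq ht hx).hasDerivWithinAt)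
    (injOn_sqrt_sq_sub_sq_Ioi ht)] at hg
  exact (hg.congr_fun (fun x hx => abs_deriv_smul_comp_sqrt_sq_sub_sq ht g hx)
    measurableSet_Ioi).of_forall_sdiff_eq_zero measurableSet_Ioi
    fun x => div_sqrt_sq_sub_sq_smul_eq_zero g

end AbelSubstitution

lemma hasDerivAt_sqrt_sq_add_sq {x : ℝ} (hx : x ≠ 0) (r : ℝ) :
    HasDerivAt (fun r => √(x ^ 2 + r ^ 2)) (r / √(x ^ 2 + r ^ 2)) r := by
  refine (((hasDerivAt_pow 2 r).const_add (x ^ 2)).sqrt (by positivity)).congr_deriv ?_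
  rw [Nat.cast_two, Nat.add_one_sub_one, pow_one, mul_div_mul_left _ _ two_ne_zero]

lemma two_mul_besselKi_zero {x : ℝ} (hx : 0 < x) (c : ℝ) :
    2 * besselKi 0 (x * c) =
      ∫ y : ℝ, exp (-√(x ^ 2 + y ^ 2) * c) / √(x ^ 2 + y ^ 2) := by
  have h_cosh : 2 * besselKi 0 (x * c) = ∫ v : ℝ, exp (-(x * c) * cosh v) := by
    rw [integral_eq_two_mul_integral_Ioi_of_even (fun v => by rw [cosh_neg])]
    simp only [besselKi, zero_mul, cos_zero, mul_one]
  have h_deriv (v : ℝ) : HasDerivWithinAt (fun v => x * sinh v) (x * cosh v) Set.univ v :=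
    ((hasDerivAt_sinh v).const_mul x).hasDerivWithinAt
  have h_image : (fun v => x * sinh v) '' Set.univ = Set.univ :=
    Set.image_univ_of_surjective ((mul_left_surjective₀ hx.ne').comp sinh_surjective)
  rw [h_cosh, ← setIntegral_univ (f := fun y : ℝ => _ / _), ← h_image,
    integral_image_eq_integral_abs_deriv_smul .univ (fun v _ => h_deriv v)
      ((mul_right_injective₀ hx.ne').comp sinh_injective).injOn, setIntegral_univ]
  congr 1 with v
  have h_pos : 0 < x * cosh v := mul_pos hx (cosh_pos v)
  have h_sqrt : √(x ^ 2 + (x * sinh v) ^ 2) = x * cosh v := by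
    rw [mul_pow, ← mul_one_add, add_comm, ← cosh_sq, ← mul_pow, sqrt_sq h_pos.le]
  rw [h_sqrt, abs_of_pos h_pos, smul_eq_mul, mul_div_cancel₀ _ h_pos.ne']
  ring_nf

section RadialExponential

variable {t c : ℝ}

lemma hasDerivAt_neg_exp_neg_sqrt_sq_add_sq_mul_div (ht : t ≠ 0) (hc : c ≠ 0) (r : ℝ) :
    HasDerivAt (fun r => -(exp (-√(t ^ 2 + r ^ 2) * c) / c))
      (r • (exp (-√(t ^ 2 + r ^ 2) * c) / √(t ^ 2 + r ^ 2))) r := by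
  refine (((hasDerivAt_sqrt_sq_add_sq ht r).neg.mul_const c).exp.div_const c).neg.congr_deriv ?_
  simp only [Pi.neg_apply, smul_eq_mul]
  field_simp

lemma tendsto_neg_exp_neg_sqrt_sq_add_sq_mul_div (t : ℝ) (hc : 0 < c) :
    Filter.Tendsto (fun r => -(exp (-√(t ^ 2 + r ^ 2) * c) / c)) Filter.atTop (nhds 0) := by
  have h_sqrt : Filter.Tendsto (fun r => √(t ^ 2 + r ^ 2)) Filter.atTop Filter.atTop :=
    Filter.tendsto_atTop_mono (fun r => le_sqrt_of_sq_le (le_add_of_nonneg_left (sq_nonneg t)))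
      Filter.tendsto_id
  have h_exp := tendsto_exp_neg_atTop_nhds_zero.comp (h_sqrt.atTop_mul_const hc)
  simpa only [neg_mul, Function.comp_def, zero_div, neg_zero] using (h_exp.div_const c).neg

lemma integrableOn_radial_exp_neg (ht : t ≠ 0) (hc : 0 < c) :
    IntegrableOn (fun r => r • (exp (-√(t ^ 2 + r ^ 2) * c) / √(t ^ 2 + r ^ 2))) (Set.Ioi 0) :=
  integrableOn_Ioi_deriv_of_nonneg'
    (fun r _ => hasDerivAt_neg_exp_neg_sqrt_sq_add_sq_mul_div ht hc.ne' r)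
    (fun r hr => smul_nonneg (le_of_lt hr) (by positivity))
    (tendsto_neg_exp_neg_sqrt_sq_add_sq_mul_div t hc)

lemma integral_radial_exp_neg (ht : 0 < t) (hc : 0 < c) :
    ∫ r in Set.Ioi 0, r • (exp (-√(t ^ 2 + r ^ 2) * c) / √(t ^ 2 + r ^ 2)) =
      exp (-t * c) / c := by
  rw [integral_Ioi_of_hasDerivAt_of_tendsto'
    (fun r _ => hasDerivAt_neg_exp_neg_sqrt_sq_add_sq_mul_div ht.ne' hc.ne' r)
    (integrableOn_radial_exp_neg ht.ne' hc) (tendsto_neg_exp_neg_sqrt_sq_add_sq_mul_div t hc)]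
  simp only [ne_eq, OfNat.ofNat_ne_zero, not_false_eq_true, zero_pow, add_zero, sqrt_sq ht.le,
    sub_neg_eq_add, zero_add]

end RadialExponential

section AbelTransformOfMacdonald

variable {t c : ℝ}

lemma two_mul_besselKi_zero_sqrt_sq_add_sq (ht : t ≠ 0) (c r : ℝ) :
    2 * besselKi 0 (√(t ^ 2 + r ^ 2) * c) =
      ∫ y : ℝ, exp (-√(t ^ 2 + √(r ^ 2 + y ^ 2) ^ 2) * c) / √(t ^ 2 + √(r ^ 2 + y ^ 2) ^ 2) := by
  rw [two_mul_besselKi_zero (by positivity)]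
  congr 1 with y
  rw [sq_sqrt (by positivity), sq_sqrt (by positivity), add_assoc]

lemma integrable_prod_radial_exp_neg (ht : t ≠ 0) (hc : 0 < c) :
    Integrable (fun p : ℝ × ℝ => exp (-√(t ^ 2 + √(p.1 ^ 2 + p.2 ^ 2) ^ 2) * c) /
      √(t ^ 2 + √(p.1 ^ 2 + p.2 ^ 2) ^ 2)) :=
  (integrable_comp_sqrt_sq_add_sq
    (g := fun r => exp (-√(t ^ 2 + r ^ 2) * c) / √(t ^ 2 + r ^ 2))).2
    (integrableOn_radial_exp_neg ht hc)

lemma integrable_besselKi_zero_sqrt_sq_add_sq (ht : t ≠ 0) (hc : 0 < c) :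
    Integrable (fun r => besselKi 0 (√(t ^ 2 + r ^ 2) * c)) := by
  have h := (integrable_prod_radial_exp_neg ht hc).integral_prod_left
  simp only [← two_mul_besselKi_zero_sqrt_sq_add_sq ht] at h
  simpa only [inv_mul_cancel_left₀ (two_ne_zero (α := ℝ))] using h.const_mul 2⁻¹

lemma integral_besselKi_zero_sqrt_sq_add_sq (ht : 0 < t) (hc : 0 < c) :
    ∫ r : ℝ, besselKi 0 (√(t ^ 2 + r ^ 2) * c) = π * (exp (-t * c) / c) := by
  have h := integral_prod _ (integrable_prod_radial_exp_neg ht.ne' hc)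
  simp only [← Measure.volume_eq_prod] at h
  rw [integral_comp_sqrt_sq_add_sq
    (fun r => exp (-√(t ^ 2 + r ^ 2) * c) / √(t ^ 2 + r ^ 2)), integral_radial_exp_neg ht hc] at h
  simp_rw [← two_mul_besselKi_zero_sqrt_sq_add_sq ht.ne', integral_const_mul] at h
  rw [smul_eq_mul] at h
  linarith

lemma integrableOn_div_sqrt_sq_sub_sq_mul_besselKi_zero (ht : 0 < t) (hc : 0 < c) :
    IntegrableOn (fun x => x / √(x ^ 2 - t ^ 2) * besselKi 0 (x * c)) (Set.Ioi 0) :=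
  integrableOn_div_sqrt_sq_sub_sq_smul ht.le (g := fun x => besselKi 0 (x * c))
    (integrable_besselKi_zero_sqrt_sq_add_sq ht.ne' hc).integrableOn

lemma integral_div_sqrt_sq_sub_sq_mul_besselKi_zero (ht : 0 < t) (hc : 0 < c) :
    ∫ x in Set.Ioi 0, x / √(x ^ 2 - t ^ 2) * besselKi 0 (x * c) =
      π * exp (-t * c) / (2 * c) := by
  have h_even := integral_eq_two_mul_integral_Ioi_of_even
    (g := fun r => besselKi 0 (√(t ^ 2 + r ^ 2) * c)) (fun r => by simp only [neg_sq])
  rw [integral_besselKi_zero_sqrt_sq_add_sq ht hc] at h_even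
  have h := integral_div_sqrt_sq_sub_sq_smul ht.le (fun x => besselKi 0 (x * c))
  simp only [smul_eq_mul] at h
  rw [h, ← mul_div_mul_left _ _ two_ne_zero, ← mul_right_inj' (two_ne_zero (α := ℝ)), ← h_even]
  field_simp

end AbelTransformOfMacdonald

section AbelMacdonaldPairing

variable {β : Type*} {c h : β → ℝ} {g : ℝ → ℝ}

/-- The Abel transform `x ↦ ∫₀ˣ g(t) (x² - t²)^{-1/2} dt`; that of `K_{in}` is `Lₙ`. -/
noncomputable def abelTransform (g : ℝ → ℝ) (x : ℝ) : ℝ :=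
  ∫ t in (0 : ℝ)..x, g t / √(x ^ 2 - t ^ 2)

lemma setIntegral_Ioi_div_sqrt_sq_sub_sq {x : ℝ} (hx : 0 ≤ x) (g : ℝ → ℝ) :
    ∫ t in Set.Ioi 0, g t / √(x ^ 2 - t ^ 2) = abelTransform g x := by
  rw [abelTransform, intervalIntegral.integral_of_le hx]
  refine setIntegral_eq_of_subset_of_forall_sdiff_eq_zero measurableSet_Ioi
    Set.Ioc_subset_Ioi_self fun t ht => ?_
  have hxt : x ≤ t := le_of_not_ge fun htx => ht.2 ⟨ht.1, htx⟩
  rw [sqrt_sq_sub_sq_eq_zero hx hxt, div_zero]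

/-- The function of `(x, (t, y))` whose integral over `(t, y)` is the product of the
`macdonaldTransform` of `h` and the `abelTransform` of `g` at `x`. -/
noncomputable def pairingKernel (c h : β → ℝ) (g : ℝ → ℝ) (x : ℝ) (p : ℝ × β) : ℝ :=
  x / √(x ^ 2 - p.1 ^ 2) * besselKi 0 (x * c p.2) * (g p.1 * h p.2)

/-- The value of `∫₀^∞ pairingKernel c h g x p dx`. -/
noncomputable def pairingMarginal (c h : β → ℝ) (g : ℝ → ℝ) (p : ℝ × β) : ℝ :=
  π * exp (-p.1 * c p.2) / (2 * c p.2) * (g p.1 * h p.2)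

lemma norm_pairingKernel {x : ℝ} (hx : 0 ≤ x) (p : ℝ × β) :
    ‖pairingKernel c h g x p‖ = pairingKernel c |h| |g| x p := by
  have h_nonneg : 0 ≤ x / √(x ^ 2 - p.1 ^ 2) * besselKi 0 (x * c p.2) :=
    mul_nonneg (by positivity) (besselKi_zero_nonneg _)
  rw [pairingKernel, norm_mul, norm_of_nonneg h_nonneg, norm_mul]
  rfl

lemma norm_pairingMarginal {p : ℝ × β} (hc : 0 ≤ c p.2) :
    ‖pairingMarginal c h g p‖ = pairingMarginal c |h| |g| p := by
  rw [pairingMarginal, norm_mul, norm_of_nonneg (by positivity), norm_mul]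
  rfl

lemma norm_pairingMarginal_le {p : ℝ × β} (ht : 0 ≤ p.1) (hc : 1 ≤ c p.2) :
    ‖pairingMarginal c h g p‖ ≤ π / 2 * (|g p.1| * exp (-p.1) * |h p.2|) := by
  have h_exp : exp (-p.1 * c p.2) ≤ exp (-p.1) :=
    exp_le_exp.2 (mul_le_of_one_le_right (neg_nonpos.2 ht) hc)
  calc ‖pairingMarginal c h g p‖
      = π * exp (-p.1 * c p.2) / (2 * c p.2) * (|g p.1| * |h p.2|) :=
        norm_pairingMarginal (zero_le_one.trans hc)
    _ ≤ π * exp (-p.1) / (2 * 1) * (|g p.1| * |h p.2|) := by gcongr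
    _ = π / 2 * (|g p.1| * exp (-p.1) * |h p.2|) := by ring

lemma integrableOn_pairingKernel {p : ℝ × β} (ht : 0 < p.1) (hc : 0 < c p.2) :
    IntegrableOn (fun x => pairingKernel c h g x p) (Set.Ioi 0) :=
  (integrableOn_div_sqrt_sq_sub_sq_mul_besselKi_zero ht hc).mul_const _

lemma integral_pairingKernel {p : ℝ × β} (ht : 0 < p.1) (hc : 0 < c p.2) :
    ∫ x in Set.Ioi 0, pairingKernel c h g x p = pairingMarginal c h g p := by
  simp only [pairingKernel, pairingMarginal]
  rw [integral_mul_const, integral_div_sqrt_sq_sub_sq_mul_besselKi_zero ht hc]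

lemma integral_norm_pairingKernel {p : ℝ × β} (ht : 0 < p.1) (hc : 0 < c p.2) :
    ∫ x in Set.Ioi 0, ‖pairingKernel c h g x p‖ = ‖pairingMarginal c h g p‖ := by
  rw [norm_pairingMarginal hc.le, ← integral_pairingKernel ht hc]
  exact setIntegral_congr_fun measurableSet_Ioi fun x hx => norm_pairingKernel (le_of_lt hx) p

variable [MeasurableSpace β] {ν : Measure β}

/-- The superposition `x ↦ x ∫ K₀(x c(y)) h(y) dν(y)` of Macdonald functions; the kernel `Φₙ` is the
case `c = cosh`, `h(u) = sinh(2u) sin(nu)` and Lebesgue measure on `(-π, π]`. -/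
noncomputable def macdonaldTransform (ν : Measure β) (c h : β → ℝ) (x : ℝ) : ℝ :=
  x * ∫ y, besselKi 0 (x * c y) * h y ∂ν

lemma measurable_pairingKernel (hc : Measurable c) (hh : Measurable h) (hg : Measurable g) :
    Measurable fun q : ℝ × ℝ × β => pairingKernel c h g q.1 q.2 := by
  have h_besselKi := measurable_besselKi 0
  unfold pairingKernel
  fun_prop

lemma measurable_pairingMarginal (hc : Measurable c) (hh : Measurable h) (hg : Measurable g) :
    Measurable (pairingMarginal c h g) := by
  unfold pairingMarginal
  fun_prop

lemma ae_fst_pos_restrict_Ioi_prod :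
    ∀ᵐ p ∂(volume.restrict (Set.Ioi (0 : ℝ))).prod ν, 0 < p.1 :=
  Measure.quasiMeasurePreserving_fst.ae (ae_restrict_mem measurableSet_Ioi)

lemma integrable_prod_abs_mul_exp_neg_mul_abs (hh : Integrable h ν)
    (hg : IntegrableOn (fun t => g t * exp (-t)) (Set.Ioi 0)) :
    Integrable (fun p : ℝ × β => π / 2 * (|g p.1| * exp (-p.1) * |h p.2|))
      ((volume.restrict (Set.Ioi 0)).prod ν) := by
  have hg_norm := hg.norm
  simp only [norm_mul, norm_eq_abs, abs_exp] at hg_norm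
  exact (hg_norm.mul_prod hh.abs).const_mul _

lemma integral_pairingKernel_prod [SFinite ν] {x : ℝ} (hx : 0 ≤ x) :
    ∫ p, pairingKernel c h g x p ∂(volume.restrict (Set.Ioi 0)).prod ν =
      macdonaldTransform ν c h x * abelTransform g x := by
  calc ∫ p, pairingKernel c h g x p ∂(volume.restrict (Set.Ioi 0)).prod ν
      = ∫ p, g p.1 / √(x ^ 2 - p.1 ^ 2) * (x * (besselKi 0 (x * c p.2) * h p.2))
          ∂(volume.restrict (Set.Ioi 0)).prod ν := by
        congr 1 with p
        rw [pairingKernel]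
        ring
    _ = (∫ t in Set.Ioi 0, g t / √(x ^ 2 - t ^ 2)) *
          ∫ y, x * (besselKi 0 (x * c y) * h y) ∂ν :=
        integral_prod_mul (fun t => g t / √(x ^ 2 - t ^ 2))
          fun y => x * (besselKi 0 (x * c y) * h y)
    _ = macdonaldTransform ν c h x * abelTransform g x := by
        rw [setIntegral_Ioi_div_sqrt_sq_sub_sq hx, integral_const_mul, mul_comm,
          macdonaldTransform]

section Integrability

variable (hc_meas : Measurable c) (hc : ∀ y, 1 ≤ c y) (hh_meas : Measurable h)
  (hh : Integrable h ν) (hg_meas : Measurable g)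
  (hg : IntegrableOn (fun t => g t * exp (-t)) (Set.Ioi 0))

include hc_meas hc hh_meas hh hg_meas hg

lemma integrable_pairingMarginal :
    Integrable (pairingMarginal c h g) ((volume.restrict (Set.Ioi 0)).prod ν) := by
  refine (integrable_prod_abs_mul_exp_neg_mul_abs hh hg).mono'
    (measurable_pairingMarginal hc_meas hh_meas hg_meas).aestronglyMeasurable ?_
  filter_upwards [ae_fst_pos_restrict_Ioi_prod] with p hp
  exact norm_pairingMarginal_le hp.le (hc p.2)

variable [SFinite ν]

lemma integrable_pairingKernel :
    Integrable (fun q : ℝ × ℝ × β => pairingKernel c h g q.1 q.2)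
      ((volume.restrict (Set.Ioi 0)).prod ((volume.restrict (Set.Ioi 0)).prod ν)) := by
  have hc_pos (y : β) : 0 < c y := zero_lt_one.trans_le (hc y)
  rw [integrable_prod_iff'
    (measurable_pairingKernel hc_meas hh_meas hg_meas).aestronglyMeasurable]
  constructor
  · filter_upwards [ae_fst_pos_restrict_Ioi_prod] with p hp
    exact integrableOn_pairingKernel hp (hc_pos p.2)
  · refine (integrable_pairingMarginal hc_meas hc hh_meas hh hg_meas hg).norm.congr ?_
    filter_upwards [ae_fst_pos_restrict_Ioi_prod] with p hp
    exact (integral_norm_pairingKernel hp (hc_pos p.2)).symm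

lemma integrableOn_macdonaldTransform_mul_abelTransform :
    IntegrableOn (fun x => macdonaldTransform ν c h x * abelTransform g x) (Set.Ioi 0) :=
  IntegrableOn.congr_fun
    (integrable_pairingKernel hc_meas hc hh_meas hh hg_meas hg).integral_prod_left
    (fun _ hx => integral_pairingKernel_prod (le_of_lt hx)) measurableSet_Ioi

lemma integral_abs_macdonaldTransform_mul_abelTransform_le :
    ∫ x in Set.Ioi 0, |macdonaldTransform ν c h x * abelTransform g x| ≤
      π / 2 * ((∫ t in Set.Ioi 0, |g t| * exp (-t)) * ∫ y, |h y| ∂ν) := by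
  have h_int := integrable_pairingKernel hc_meas hc hh_meas hh hg_meas hg
  calc ∫ x in Set.Ioi 0, |macdonaldTransform ν c h x * abelTransform g x|
      = ∫ x in Set.Ioi 0, ‖∫ p, pairingKernel c h g x p ∂(volume.restrict (Set.Ioi 0)).prod ν‖ :=
        setIntegral_congr_fun measurableSet_Ioi fun x hx => by
          simp only [integral_pairingKernel_prod (le_of_lt hx), norm_eq_abs]
    _ ≤ ∫ x in Set.Ioi 0, ∫ p, ‖pairingKernel c h g x p‖ ∂(volume.restrict (Set.Ioi 0)).prod ν :=
        integral_mono h_int.integral_prod_left.norm h_int.norm.integral_prod_left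
          fun x => norm_integral_le_integral_norm _
    _ = ∫ p, (∫ x in Set.Ioi 0, ‖pairingKernel c h g x p‖) ∂(volume.restrict (Set.Ioi 0)).prod ν :=
        integral_integral_swap h_int.norm
    _ ≤ ∫ p, π / 2 * (|g p.1| * exp (-p.1) * |h p.2|) ∂(volume.restrict (Set.Ioi 0)).prod ν := by
        refine integral_mono_ae h_int.norm.integral_prod_right
          (integrable_prod_abs_mul_exp_neg_mul_abs hh hg) ?_
        filter_upwards [ae_fst_pos_restrict_Ioi_prod] with p hp
        rw [integral_norm_pairingKernel hp (zero_lt_one.trans_le (hc p.2))]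
        exact norm_pairingMarginal_le hp.le (hc p.2)
    _ = π / 2 * ((∫ t in Set.Ioi 0, |g t| * exp (-t)) * ∫ y, |h y| ∂ν) := by
        rw [integral_const_mul,
          integral_prod_mul (fun t => |g t| * exp (-t)) fun y => |h y|]

lemma integral_macdonaldTransform_mul_abelTransform :
    ∫ x in Set.Ioi 0, macdonaldTransform ν c h x * abelTransform g x =
      ∫ y, π / (2 * c y) * h y * (∫ t in Set.Ioi 0, g t * exp (-t * c y)) ∂ν := by
  have h_int := integrable_pairingKernel hc_meas hc hh_meas hh hg_meas hg
  calc ∫ x in Set.Ioi 0, macdonaldTransform ν c h x * abelTransform g x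
      = ∫ x in Set.Ioi 0, ∫ p, pairingKernel c h g x p ∂(volume.restrict (Set.Ioi 0)).prod ν :=
        setIntegral_congr_fun measurableSet_Ioi fun x hx =>
          (integral_pairingKernel_prod (le_of_lt hx)).symm
    _ = ∫ p, (∫ x in Set.Ioi 0, pairingKernel c h g x p) ∂(volume.restrict (Set.Ioi 0)).prod ν :=
        integral_integral_swap h_int
    _ = ∫ p, pairingMarginal c h g p ∂(volume.restrict (Set.Ioi 0)).prod ν := by
        refine integral_congr_ae ?_
        filter_upwards [ae_fst_pos_restrict_Ioi_prod] with p hp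
        exact integral_pairingKernel hp (zero_lt_one.trans_le (hc p.2))
    _ = ∫ y, (∫ t in Set.Ioi 0, pairingMarginal c h g (t, y)) ∂ν :=
        integral_prod_symm _ (integrable_pairingMarginal hc_meas hc hh_meas hh hg_meas hg)
    _ = ∫ y, π / (2 * c y) * h y * (∫ t in Set.Ioi 0, g t * exp (-t * c y)) ∂ν := by
        congr 1 with y
        rw [← integral_const_mul]
        congr 1 with t
        rw [pairingMarginal]
        ring

end Integrability

end AbelMacdonaldPairing

section SineOrthogonality

lemma integral_cos_int_mul {k : ℤ} (hk : k ≠ 0) : ∫ u in (-π)..π, cos (k * u) = 0 := by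
  rw [intervalIntegral.integral_comp_mul_left cos (Int.cast_ne_zero.2 hk), integral_cos, mul_neg,
    sin_neg, sin_int_mul_pi, neg_zero, sub_zero, smul_zero]

lemma integral_sin_mul_sin {n : ℕ} (hn : n ≠ 0) (m : ℕ) :
    ∫ u in (-π)..π, sin (n * u) * sin (m * u) = if m = n then π else 0 := by
  have h_prod (u : ℝ) : sin (n * u) * sin (m * u) =
      (cos ((n - m : ℤ) * u) - cos ((n + m : ℤ) * u)) / 2 := by
    push_cast
    rw [sub_mul, add_mul, cos_sub, cos_add]
    ring
  have h_int (k : ℤ) : IntervalIntegrable (fun u => cos (k * u)) volume (-π) π :=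
    (continuous_cos.comp (continuous_const_mul (k : ℝ))).intervalIntegrable _ _
  simp_rw [h_prod]
  rw [intervalIntegral.integral_div, intervalIntegral.integral_sub (h_int _) (h_int _),
    integral_cos_int_mul (k := n + m) (by omega), sub_zero]
  split_ifs with hmn
  · simp only [hmn, sub_self, Int.cast_zero, zero_mul, cos_zero, integral_one]
    ring
  · rw [integral_cos_int_mul (by omega), zero_div]

end SineOrthogonality

section Biorthogonality

/-- The weight `sinh(2u) sin(nu)` in the integral defining `Φₙ`. -/
noncomputable def phiWeight (n : ℕ) (u : ℝ) : ℝ := sinh (2 * u) * sin (n * u)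

lemma continuous_phiWeight (n : ℕ) : Continuous (phiWeight n) := by
  unfold phiWeight
  fun_prop

lemma integrableOn_phiWeight (n : ℕ) : IntegrableOn (phiWeight n) (Set.Ioc (-π) π) :=
  (continuous_phiWeight n).integrableOn_Ioc

lemma PhiKer_eq_macdonaldTransform (n : ℕ) :
    PhiKer n = macdonaldTransform (volume.restrict (Set.Ioc (-π) π)) cosh (phiWeight n) := by
  ext x
  simp only [PhiKer, macdonaldTransform, phiWeight, mul_assoc,
    intervalIntegral.integral_of_le (neg_le_self pi_pos.le)]

lemma lebedevL_eq_abelTransform (m : ℕ) : lebedevL m = abelTransform (besselKi m) := rfl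

lemma integrableOn_PhiKer_mul_lebedevL (n m : ℕ) :
    IntegrableOn (fun x => PhiKer n x * lebedevL m x) (Set.Ioi 0) := by
  rw [PhiKer_eq_macdonaldTransform, lebedevL_eq_abelTransform]
  exact integrableOn_macdonaldTransform_mul_abelTransform measurable_cosh one_le_cosh
    (continuous_phiWeight n).measurable (integrableOn_phiWeight n) (measurable_besselKi m)
    (integrableOn_besselKi_mul_exp_neg m)

lemma integral_abs_PhiKer_mul_lebedevL_le (n m : ℕ) :
    ∫ x in Set.Ioi 0, |PhiKer n x * lebedevL m x| ≤
      (π / 2) ^ 2 * (∫ u in Set.Ioc (-π) π, |phiWeight n u|) * exp (-π * m / 2) := by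
  rw [PhiKer_eq_macdonaldTransform, lebedevL_eq_abelTransform]
  calc _ ≤ π / 2 * ((∫ t in Set.Ioi 0, |besselKi m t| * exp (-t)) *
          ∫ u in Set.Ioc (-π) π, |phiWeight n u|) :=
        integral_abs_macdonaldTransform_mul_abelTransform_le measurable_cosh one_le_cosh
          (continuous_phiWeight n).measurable (integrableOn_phiWeight n) (measurable_besselKi m)
          (integrableOn_besselKi_mul_exp_neg m)
    _ ≤ π / 2 * ((π / 2 * exp (-π * m / 2)) * ∫ u in Set.Ioc (-π) π, |phiWeight n u|) := by
        gcongr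
        exact integral_abs_besselKi_mul_exp_neg_le m
    _ = _ := by ring

lemma phiWeight_mul_laplace_besselKi (n : ℕ) {m : ℕ} (hm : m ≠ 0) (u : ℝ) :
    π / (2 * cosh u) * phiWeight n u * ∫ t in Set.Ioi 0, besselKi m t * exp (-t * cosh u) =
      π ^ 2 / sinh (π * m) * (sin (n * u) * sin (m * u)) := by
  have h_cosh : cosh u ≠ 0 := (cosh_pos u).ne'
  calc _ = π * sin (n * u) *
        (sinh u * ∫ t in Set.Ioi 0, besselKi m t * exp (-t * cosh u)) := by
        rw [phiWeight, sinh_two_mul]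
        field_simp
    _ = _ := by
        rw [laplace_besselKi (Nat.cast_ne_zero.2 hm)]
        ring

lemma integral_PhiKer_mul_lebedevL {n m : ℕ} (hn : n ≠ 0) (hm : m ≠ 0) :
    ∫ x in Set.Ioi 0, PhiKer n x * lebedevL m x =
      if m = n then π ^ 3 / sinh (π * m) else 0 := by
  rw [PhiKer_eq_macdonaldTransform, lebedevL_eq_abelTransform,
    integral_macdonaldTransform_mul_abelTransform measurable_cosh one_le_cosh
      (continuous_phiWeight n).measurable (integrableOn_phiWeight n) (measurable_besselKi m)
      (integrableOn_besselKi_mul_exp_neg m)]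
  simp_rw [phiWeight_mul_laplace_besselKi n hm]
  rw [integral_const_mul, ← intervalIntegral.integral_of_le (neg_le_self pi_pos.le),
    integral_sin_mul_sin hn]
  split_ifs <;> ring

end Biorthogonality

section TermwiseIntegration

variable {α ι E : Type*} [MeasurableSpace α] {μ : Measure α}
  [NormedAddCommGroup E]

lemma integrable_tsum_of_summable_integral_norm [Countable ι] [CompleteSpace E] {F : ι → α → E}
    (hF : ∀ i, Integrable (F i) μ) (hF_sum : Summable fun i => ∫ x, ‖F i x‖ ∂μ) :
    Integrable (fun x => ∑' i, F i x) μ := by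
  have h_lintegral : ∫⁻ x, ∑' i, ‖F i x‖ₑ ∂μ ≠ ⊤ := by
    rw [lintegral_tsum fun i => (hF i).1.enorm]
    simp_rw [← fun i => ofReal_integral_norm_eq_lintegral_enorm (hF i)]
    exact hF_sum.tsum_ofReal_ne_top
  have h_summable : ∀ᵐ x ∂μ, Summable fun i => F i x := by
    filter_upwards [ae_lt_top' (AEMeasurable.tsum fun i => (hF i).1.enorm) h_lintegral] with x hx
    exact Summable.of_enorm hx.ne
  constructor
  · refine aestronglyMeasurable_of_tendsto_ae Filter.atTop
      (f := fun (s : Finset ι) x => ∑ i ∈ s, F i x)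
      (fun s => Finset.aestronglyMeasurable_fun_sum _ fun i _ => (hF i).1) ?_
    filter_upwards [h_summable] with x hx
    exact hx.hasSum
  · exact (lintegral_mono fun x => enorm_tsum_le_tsum_enorm).trans_lt
      (lt_top_iff_ne_top.2 h_lintegral)

variable [NormedSpace ℝ E] {φ : α → ℝ} {L : ι → α → ℝ} {a : ι → E}

lemma smul_tsum_smul (φ : ℝ) (L : ι → ℝ) (a : ι → E) :
    φ • ∑' i, L i • a i = ∑' i, (φ * L i) • a i := by
  simp_rw [mul_smul, tsum_const_smul'']

lemma summable_integral_norm_mul_smul (hs : Summable fun i => ‖a i‖ * ∫ x, |φ x * L i x| ∂μ) :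
    Summable fun i => ∫ x, ‖(φ x * L i x) • a i‖ ∂μ := by
  simpa only [norm_smul, norm_eq_abs, integral_mul_const, mul_comm ‖a _‖] using hs

variable [Countable ι] [CompleteSpace E]

lemma integrable_smul_tsum_smul (hL : ∀ i, Integrable (fun x => φ x * L i x) μ)
    (hs : Summable fun i => ‖a i‖ * ∫ x, |φ x * L i x| ∂μ) :
    Integrable (fun x => φ x • ∑' i, L i x • a i) μ := by
  simp only [smul_tsum_smul]
  exact integrable_tsum_of_summable_integral_norm (fun i => (hL i).smul_const (a i))
    (summable_integral_norm_mul_smul hs)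

lemma integral_smul_tsum_smul (hL : ∀ i, Integrable (fun x => φ x * L i x) μ)
    (hs : Summable fun i => ‖a i‖ * ∫ x, |φ x * L i x| ∂μ) :
    ∫ x, φ x • ∑' i, L i x • a i ∂μ = ∑' i, (∫ x, φ x * L i x ∂μ) • a i := by
  simp only [smul_tsum_smul, ← integral_smul_const]
  exact (integral_tsum_of_summable_integral_norm (fun i => (hL i).smul_const (a i))
    (summable_integral_norm_mul_smul hs)).symm

end TermwiseIntegration

section Inversion

variable {E : Type*} [NormedAddCommGroup E]

lemma summable_norm_mul_integral_abs_PhiKer_mul_lebedevL {a : ℕ → E}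
    (hsum : Summable fun i : ℕ => ‖a (i + 1)‖ * exp (-π * (i + 1) / 2)) (n : ℕ) :
    Summable fun i => ‖a (i + 1)‖ * ∫ x in Set.Ioi 0, |PhiKer n x * lebedevL (i + 1) x| := by
  refine (hsum.mul_left ((π / 2) ^ 2 * ∫ u in Set.Ioc (-π) π, |phiWeight n u|)).of_nonneg_of_le
    (fun i => by positivity) fun i => ?_
  rw [mul_left_comm]
  gcongr
  exact_mod_cast integral_abs_PhiKer_mul_lebedevL_le n (i + 1)

variable [NormedSpace ℝ E]

lemma tsum_integral_PhiKer_mul_lebedevL_smul (a : ℕ → E) {n : ℕ} (hn : n ≠ 0) :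
    ∑' i, (∫ x in Set.Ioi 0, PhiKer n x * lebedevL (i + 1) x) • a (i + 1) =
      (π ^ 3 / sinh (π * n)) • a n := by
  obtain ⟨k, rfl⟩ := Nat.exists_eq_add_one_of_ne_zero hn
  rw [tsum_eq_single k fun i hi => by
      rw [integral_PhiKer_mul_lebedevL hn (Nat.add_one_ne_zero i),
        if_neg (mt Nat.add_right_cancel hi), zero_smul],
    integral_PhiKer_mul_lebedevL hn hn, if_pos rfl]

theorem lebedev_discrete_inversion_third_general [CompleteSpace E] (a : ℕ → E)
    (hsum : Summable (fun n : ℕ => ‖a (n + 1)‖ * exp (-π * ((n : ℝ) + 1) / 2))) (f : ℝ → E)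
    (hf : ∀ x : ℝ, 0 < x → f x = ∑' n : ℕ, lebedevL (n + 1) x • a (n + 1)) :
    ∀ n : ℕ, 0 < n → IntegrableOn (fun x => PhiKer n x • f x) (Set.Ioi 0) ∧
      a n = (sinh (π * n) / π ^ 3) • ∫ x in Set.Ioi 0, PhiKer n x • f x := by
  intro n hn
  have h_int (i : ℕ) := integrableOn_PhiKer_mul_lebedevL n (i + 1)
  have h_summable := summable_norm_mul_integral_abs_PhiKer_mul_lebedevL hsum n
  have h_series : Set.EqOn (fun x => PhiKer n x • f x)
      (fun x => PhiKer n x • ∑' i : ℕ, lebedevL (i + 1) x • a (i + 1)) (Set.Ioi 0) :=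
    fun x hx => by simp only [hf x hx]
  have h_sinh : sinh (π * n) ≠ 0 :=
    sinh_ne_zero.2 (mul_ne_zero pi_ne_zero (Nat.cast_ne_zero.2 hn.ne'))
  constructor
  · exact IntegrableOn.congr_fun (integrable_smul_tsum_smul h_int h_summable) h_series.symm
      measurableSet_Ioi
  · rw [setIntegral_congr_fun measurableSet_Ioi h_series, integral_smul_tsum_smul h_int h_summable,
      tsum_integral_PhiKer_mul_lebedevL_smul a hn.ne', smul_smul,
      div_mul_div_cancel₀ (by positivity), div_self h_sinh, one_smul]

end Inversion

/-- Theorem 3: inversion of the discrete transform (1.6). -/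
theorem lebedev_discrete_inversion_third
    (a : ℕ → ℂ)
    (hsum : Summable (fun n : ℕ => ‖a (n + 1)‖ * Real.exp (-π * ((n : ℝ) + 1) / 2)))
    (f : ℝ → ℂ)
    (hf : ∀ x : ℝ, 0 < x →
      f x = ∑' n : ℕ, a (n + 1) * ((lebedevL (n + 1) x : ℝ) : ℂ)) :
    ∀ n : ℕ, 0 < n →
      IntegrableOn (fun x : ℝ => ((PhiKer n x : ℝ) : ℂ) * f x) (Set.Ioi (0 : ℝ)) ∧
      a n = ((Real.sinh (π * n) / π ^ 3 : ℝ) : ℂ) *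
        ∫ x in Set.Ioi (0 : ℝ), ((PhiKer n x : ℝ) : ℂ) * f x := by
  simpa only [Complex.real_smul] using lebedev_discrete_inversion_third_general a hsum f
    fun x hx => by simpa only [Complex.real_smul, mul_comm] using hf x hx
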